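/- arXiv:2511.22495 — 3 statements merged into one kernel-verified Lean document; each statement's English description precedes it below -/
import Mathlib

section
/- The proper (i.e., different from the whole algebra) subalgebras of the crystal lattice C, i.e., the nonempty subsets of C closed under ∧, ∨, ¬, and ·, are exactly the following eight: {a}, {b}, {⊥,⊤}, {⊥,a,⊤}, {⊥,b,⊤}, {⊥,t,f,⊤}, {⊥,t,a,f,⊤}, and {⊥,t,b,f,⊤}. -/
/-- The universe of the crystal lattice `C`: six elements `⊥, t, a, b, f, ⊤`. -/
inductive Cry : Type
  | bot | t | a | b | f | top
  deriving DecidableEq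

namespace Cry

/-- The lattice order of `C`: `⊥ < t < a < f < ⊤` and `t < b < f`, with `a, b` incomparable. -/
def leb : Cry → Cry → Bool
  | bot, _ => true
  | _, top => true
  | t, bot => false
  | t, _ => true
  | a, a => true
  | a, f => true
  | a, _ => false
  | b, b => true
  | b, f => true
  | b, _ => false
  | f, f => true
  | f, _ => false
  | top, _ => false

/-- Meet: the only incomparable pair is `{a, b}`, whose meet is `t`. -/
def meet (x y : Cry) : Cry := if leb x y then x else if leb y x then y else t

/-- Join: the only incomparable pair is `{a, b}`, whose join is `f`. -/
def join (x y : Cry) : Cry := if leb x y then y else if leb y x then x else f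

/-- The involution `¬`. -/
def neg : Cry → Cry
  | bot => top
  | t => f
  | a => a
  | b => b
  | f => t
  | top => bot

/-- Fusion `·`: commutative with identity `t`; `⊥·x = ⊥`; `⊤·x = ⊤` for `x ≠ ⊥`;
`a·a = a`; `b·b = b`; and `a·b = a·f = b·f = f·f = ⊤`. -/
def fus : Cry → Cry → Cry
  | bot, _ => bot
  | _, bot => bot
  | top, _ => top
  | _, top => top
  | t, x => x
  | x, t => x
  | a, a => a
  | b, b => b
  | _, _ => top

/-- A subalgebra of `C`: a nonempty subset closed under `∧`, `∨`, `·`, and `¬`. -/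
def IsSubalg (S : Set Cry) : Prop :=
  S.Nonempty ∧
  (∀ x ∈ S, ∀ y ∈ S, meet x y ∈ S ∧ join x y ∈ S ∧ fus x y ∈ S) ∧
  (∀ x ∈ S, neg x ∈ S)

/-- A congruence on the subset `S` (with the operations inherited from `C`):
an equivalence relation on `S` compatible with `∧`, `∨`, `·`, and `¬`. -/
def IsCongOn (S : Set Cry) (r : Cry → Cry → Prop) : Prop :=
  (∀ x ∈ S, r x x) ∧
  (∀ x ∈ S, ∀ y ∈ S, r x y → r y x) ∧
  (∀ x ∈ S, ∀ y ∈ S, ∀ z ∈ S, r x y → r y z → r x z) ∧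
  (∀ x ∈ S, ∀ y ∈ S, ∀ u ∈ S, ∀ v ∈ S, r x y → r u v →
      r (meet x u) (meet y v) ∧ r (join x u) (join y v) ∧ r (fus x u) (fus y v)) ∧
  (∀ x ∈ S, ∀ y ∈ S, r x y → r (neg x) (neg y))

end Cry

/-!
Apart from `a ∧ b = t`, `a ∨ b = f` and `a · b = a · f = b · f = f · f = ⊤`, every value of a
binary operation of `C` is one of its two arguments. So a nonempty set `S` is a subalgebra iff it
is closed under `¬`, contains `⊥` whenever it contains `t`, and contains `t` whenever it contains
both `a` and `b`. A subalgebra with `a` and `b` is all of `C`, so a proper one omits `a` or `b`, and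
it is determined by which of `⊥`, `t`, `a`, `b` it contains.
-/

namespace Cry

theorem meet_eq_left_or_eq_right_or_incomparable (x y : Cry) :
    meet x y = x ∨ meet x y = y ∨ s(x, y) = s(a, b) := by
  cases x <;> cases y <;> decide

theorem join_eq_left_or_eq_right_or_incomparable (x y : Cry) :
    join x y = x ∨ join x y = y ∨ s(x, y) = s(a, b) := by
  cases x <;> cases y <;> decide

theorem fus_eq_left_or_eq_right_or_eq_top (x y : Cry) :
    fus x y = x ∨ fus x y = y ∨ fus x y = top ∧ (x = f ∨ y = f ∨ s(x, y) = s(a, b)) := by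
  cases x <;> cases y <;> decide

variable {S : Set Cry}

namespace IsSubalg

theorem meet_mem (hS : IsSubalg S) {x y : Cry} (hx : x ∈ S) (hy : y ∈ S) : meet x y ∈ S :=
  (hS.2.1 x hx y hy).1

theorem fus_mem (hS : IsSubalg S) {x y : Cry} (hx : x ∈ S) (hy : y ∈ S) : fus x y ∈ S :=
  (hS.2.1 x hx y hy).2.2

theorem neg_mem (hS : IsSubalg S) {x : Cry} (hx : x ∈ S) : neg x ∈ S :=
  hS.2.2 x hx

theorem top_mem_iff_bot_mem (hS : IsSubalg S) : top ∈ S ↔ bot ∈ S :=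
  ⟨hS.neg_mem, hS.neg_mem⟩

theorem f_mem_iff_t_mem (hS : IsSubalg S) : f ∈ S ↔ t ∈ S :=
  ⟨hS.neg_mem, hS.neg_mem⟩

theorem bot_mem_of_t_mem (hS : IsSubalg S) (ht : t ∈ S) : bot ∈ S := by
  have hf : f ∈ S := hS.f_mem_iff_t_mem.mpr ht
  have htop : fus f f ∈ S := hS.fus_mem hf hf
  exact hS.top_mem_iff_bot_mem.mp htop

theorem t_mem_of_a_mem_of_b_mem (hS : IsSubalg S) (ha : a ∈ S) (hb : b ∈ S) : t ∈ S :=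
  hS.meet_mem ha hb

theorem eq_univ_iff (hS : IsSubalg S) : S = Set.univ ↔ a ∈ S ∧ b ∈ S := by
  refine ⟨fun h => by simp [h], fun ⟨ha, hb⟩ => Set.eq_univ_of_forall fun x => ?_⟩
  have ht : t ∈ S := hS.t_mem_of_a_mem_of_b_mem ha hb
  have hbot : bot ∈ S := hS.bot_mem_of_t_mem ht
  cases x with
  | bot => exact hbot
  | t => exact ht
  | a => exact ha
  | b => exact hb
  | f => exact hS.f_mem_iff_t_mem.mpr ht
  | top => exact hS.top_mem_iff_bot_mem.mpr hbot

end IsSubalg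

theorem isSubalg_iff :
    IsSubalg S ↔ S.Nonempty ∧ (top ∈ S ↔ bot ∈ S) ∧ (f ∈ S ↔ t ∈ S) ∧
      (t ∈ S → bot ∈ S) ∧ (a ∈ S → b ∈ S → t ∈ S) := by
  refine ⟨fun hS => ⟨hS.1, hS.top_mem_iff_bot_mem, hS.f_mem_iff_t_mem, hS.bot_mem_of_t_mem,
    hS.t_mem_of_a_mem_of_b_mem⟩, ?_⟩
  rintro ⟨hne, htop, hf, hbot, hab⟩
  have t_mem_of_incomparable {x y : Cry} (hx : x ∈ S) (hy : y ∈ S) (hxy : s(x, y) = s(a, b)) :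
      t ∈ S := by
    obtain ⟨rfl, rfl⟩ | ⟨rfl, rfl⟩ := Sym2.eq_iff.mp hxy
    exacts [hab hx hy, hab hy hx]
  refine ⟨hne, fun x hx y hy => ⟨?_, ?_, ?_⟩, fun x hx => ?_⟩
  · obtain h | h | hxy := meet_eq_left_or_eq_right_or_incomparable x y
    · rwa [h]
    · rwa [h]
    · have ht : t ∈ S := t_mem_of_incomparable hx hy hxy
      obtain ⟨rfl, rfl⟩ | ⟨rfl, rfl⟩ := Sym2.eq_iff.mp hxy <;> exact ht
  · obtain h | h | hxy := join_eq_left_or_eq_right_or_incomparable x y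
    · rwa [h]
    · rwa [h]
    · have hf_mem : f ∈ S := hf.mpr (t_mem_of_incomparable hx hy hxy)
      obtain ⟨rfl, rfl⟩ | ⟨rfl, rfl⟩ := Sym2.eq_iff.mp hxy <;> exact hf_mem
  · obtain h | h | ⟨h, hxy⟩ := fus_eq_left_or_eq_right_or_eq_top x y
    · rwa [h]
    · rwa [h]
    · have ht : t ∈ S := by
        obtain rfl | rfl | hxy := hxy
        exacts [hf.mp hx, hf.mp hy, t_mem_of_incomparable hx hy hxy]
      rw [h]
      exact htop.mpr (hbot ht)
  · cases x with
    | bot => exact htop.mpr hx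
    | t => exact hf.mpr hx
    | a => exact hx
    | b => exact hx
    | f => exact hf.mp hx
    | top => exact htop.mp hx

theorem isSubalg_and_ne_univ_iff :
    IsSubalg S ∧ S ≠ Set.univ ↔ S.Nonempty ∧ (top ∈ S ↔ bot ∈ S) ∧ (f ∈ S ↔ t ∈ S) ∧
      (t ∈ S → bot ∈ S) ∧ ¬(a ∈ S ∧ b ∈ S) := by
  rw [and_congr_right fun hS : IsSubalg S => not_congr hS.eq_univ_iff, isSubalg_iff]
  tauto

namespace IsSubalg

theorem eq_singleton_of_bot_notMem (hS : IsSubalg S) (hab : ¬(a ∈ S ∧ b ∈ S))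
    (hbot : bot ∉ S) : S = {a} ∨ S = {b} := by
  have htop : top ∉ S := mt hS.top_mem_iff_bot_mem.mp hbot
  have ht : t ∉ S := mt hS.bot_mem_of_t_mem hbot
  have hf : f ∉ S := mt hS.f_mem_iff_t_mem.mp ht
  have hsub : ∀ x ∈ S, x = a ∨ x = b := by
    rintro (_ | _ | _ | _ | _ | _) hx <;> simp_all
  obtain ⟨x, hx⟩ := hS.1
  obtain rfl | rfl := hsub x hx
  · refine .inl (Set.eq_singleton_iff_unique_mem.mpr ⟨hx, fun y hy => ?_⟩)
    exact (hsub y hy).resolve_right fun h => hab ⟨hx, h ▸ hy⟩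
  · refine .inr (Set.eq_singleton_iff_unique_mem.mpr ⟨hx, fun y hy => ?_⟩)
    exact (hsub y hy).resolve_left fun h => hab ⟨h ▸ hy, hx⟩

theorem eq_of_bot_mem_of_t_notMem (hS : IsSubalg S) (hab : ¬(a ∈ S ∧ b ∈ S))
    (hbot : bot ∈ S) (ht : t ∉ S) :
    S = {bot, top} ∨ S = {bot, a, top} ∨ S = {bot, b, top} := by
  have htop : top ∈ S := hS.top_mem_iff_bot_mem.mpr hbot
  have hf : f ∉ S := mt hS.f_mem_iff_t_mem.mp ht
  by_cases ha : a ∈ S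
  · have hb : b ∉ S := fun hb => hab ⟨ha, hb⟩
    exact .inr (.inl (by ext x; cases x <;> simp [*]))
  by_cases hb : b ∈ S
  · exact .inr (.inr (by ext x; cases x <;> simp [*]))
  · exact .inl (by ext x; cases x <;> simp [*])

theorem eq_of_t_mem (hS : IsSubalg S) (hab : ¬(a ∈ S ∧ b ∈ S)) (ht : t ∈ S) :
    S = {bot, t, f, top} ∨ S = {bot, t, a, f, top} ∨ S = {bot, t, b, f, top} := by
  have hbot : bot ∈ S := hS.bot_mem_of_t_mem ht
  have htop : top ∈ S := hS.top_mem_iff_bot_mem.mpr hbot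
  have hf : f ∈ S := hS.f_mem_iff_t_mem.mpr ht
  by_cases ha : a ∈ S
  · have hb : b ∉ S := fun hb => hab ⟨ha, hb⟩
    exact .inr (.inl (by ext x; cases x <;> simp [*]))
  by_cases hb : b ∈ S
  · exact .inr (.inr (by ext x; cases x <;> simp [*]))
  · exact .inl (by ext x; cases x <;> simp [*])

end IsSubalg

end Cry

/-- The proper subalgebras of the crystal lattice `C` are exactly the eight listed sets. -/
theorem proper_subalgebras (S : Set Cry) :
    (Cry.IsSubalg S ∧ S ≠ Set.univ) ↔
      S ∈ ({{Cry.a}, {Cry.b}, {Cry.bot, Cry.top}, {Cry.bot, Cry.a, Cry.top},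
            {Cry.bot, Cry.b, Cry.top}, {Cry.bot, Cry.t, Cry.f, Cry.top},
            {Cry.bot, Cry.t, Cry.a, Cry.f, Cry.top},
            {Cry.bot, Cry.t, Cry.b, Cry.f, Cry.top}} : Set (Set Cry)) := by
  constructor
  · rintro ⟨hS, hne⟩
    have hab : ¬(Cry.a ∈ S ∧ Cry.b ∈ S) := mt hS.eq_univ_iff.mpr hne
    by_cases hbot : Cry.bot ∈ S
    · by_cases ht : Cry.t ∈ S
      · obtain rfl | rfl | rfl := hS.eq_of_t_mem hab ht <;> simp
      · obtain rfl | rfl | rfl := hS.eq_of_bot_mem_of_t_notMem hab hbot ht <;> simp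
    · obtain rfl | rfl := hS.eq_singleton_of_bot_notMem hab hbot <;> simp
  · rintro (rfl | rfl | rfl | rfl | rfl | rfl | rfl | rfl) <;>
      simp [Cry.isSubalg_and_ne_univ_iff]
end

section
/- Every congruence on the four-element subalgebra {⊥, t, f, ⊤} of the crystal lattice C (with the operations ∧, ∨, ¬, · inherited from C) other than the identity relation relates f and t; consequently, this subalgebra is simple, i.e., its only congruences are the identity relation and the full relation. -/
/-!
All subalgebras `S` of `C` are simple. Fusion detects the order: `x · ¬y = ⊤` exactly when `x ≰ y`,
so `y · ¬y ≠ ⊤`. If a congruence identifies `x` and `y` with `x ≰ y`, fusing with `¬y` identifies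
`⊤` with some `w ≠ ⊤`. Then `⊥ = ¬⊤` is identified with `¬w ≠ ⊥`, and fusing with `⊤` identifies
`⊥` with `⊤`. Meeting with an arbitrary `z` finally identifies `⊥` with `z`.
-/

namespace Cry

section Operations

variable {x y : Cry}

theorem leb_refl (x : Cry) : leb x x := by
  cases x <;> rfl

theorem leb_antisymm (hxy : leb x y) (hyx : leb y x) : x = y := by
  cases x <;> cases y <;> simp_all [leb]

theorem bot_meet (x : Cry) : meet bot x = bot := by
  cases x <;> rfl

theorem top_meet (x : Cry) : meet top x = x := by
  cases x <;> rfl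

theorem bot_fus (x : Cry) : fus bot x = bot := by
  cases x <;> rfl

theorem fus_top_of_ne_bot (hx : x ≠ bot) : fus x top = top := by
  cases x <;> first | rfl | exact absurd rfl hx

theorem neg_ne_bot_of_ne_top (hx : x ≠ top) : neg x ≠ bot := by
  cases x <;> simp_all [neg]

theorem fus_neg_eq_top_iff : fus x (neg y) = top ↔ ¬ leb x y := by
  cases x <;> cases y <;> decide

theorem fus_neg_self_ne_top (x : Cry) : fus x (neg x) ≠ top :=
  fun h => fus_neg_eq_top_iff.mp h (leb_refl x)

end Operations

section Subalgebras

variable {S : Set Cry} {x y : Cry}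

theorem IsSubalg.fus_mem_s2 (hS : IsSubalg S) (hx : x ∈ S) (hy : y ∈ S) : fus x y ∈ S :=
  (hS.2.1 x hx y hy).2.2

theorem IsSubalg.neg_mem_s2 (hS : IsSubalg S) (hx : x ∈ S) : neg x ∈ S :=
  hS.2.2 x hx

theorem isSubalg_bot_t_f_top : IsSubalg {bot, t, f, top} := by
  refine ⟨⟨bot, Or.inl rfl⟩, ?_, ?_⟩
  · rintro x (rfl | rfl | rfl | rfl) y (rfl | rfl | rfl | rfl) <;> simp [meet, join, fus, leb]
  · rintro x (rfl | rfl | rfl | rfl) <;> simp [neg]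

end Subalgebras

namespace IsCongOn

variable {S : Set Cry} {r : Cry → Cry → Prop} {x y z : Cry}

theorem refl (hr : IsCongOn S r) (hx : x ∈ S) : r x x :=
  hr.1 x hx

theorem symm (hr : IsCongOn S r) (hx : x ∈ S) (hy : y ∈ S) (hxy : r x y) : r y x :=
  hr.2.1 x hx y hy hxy

theorem trans (hr : IsCongOn S r) (hx : x ∈ S) (hy : y ∈ S) (hz : z ∈ S)
    (hxy : r x y) (hyz : r y z) : r x z :=
  hr.2.2.1 x hx y hy z hz hxy hyz

theorem meet_right (hr : IsCongOn S r) (hx : x ∈ S) (hy : y ∈ S) (hz : z ∈ S) (hxy : r x y) :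
    r (meet x z) (meet y z) :=
  (hr.2.2.2.1 x hx y hy z hz z hz hxy (hr.refl hz)).1

theorem fus_right (hr : IsCongOn S r) (hx : x ∈ S) (hy : y ∈ S) (hz : z ∈ S) (hxy : r x y) :
    r (fus x z) (fus y z) :=
  (hr.2.2.2.1 x hx y hy z hz z hz hxy (hr.refl hz)).2.2

theorem neg_congr (hr : IsCongOn S r) (hx : x ∈ S) (hy : y ∈ S) (hxy : r x y) :
    r (neg x) (neg y) :=
  hr.2.2.2.2 x hx y hy hxy

theorem rel_of_rel_bot_top (hr : IsCongOn S r) (hbot : bot ∈ S) (htop : top ∈ S)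
    (h : r bot top) (hx : x ∈ S) (hy : y ∈ S) : r x y := by
  have rel_bot {z : Cry} (hz : z ∈ S) : r bot z := by
    simpa only [bot_meet, top_meet] using hr.meet_right hbot htop hz h
  exact hr.trans hx hbot hy (hr.symm hbot hx (rel_bot hx)) (rel_bot hy)

theorem rel_bot_top_of_rel_top (hr : IsCongOn S r) (hS : IsSubalg S) (htop : top ∈ S)
    (hx : x ∈ S) (hne : x ≠ top) (h : r top x) : r bot top := by
  have hneg : r bot (neg x) := hr.neg_congr htop hx h
  have hfus : r (fus bot top) (fus (neg x) top) :=
    hr.fus_right (hS.neg_mem_s2 htop) (hS.neg_mem_s2 hx) htop hneg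
  rwa [bot_fus, fus_top_of_ne_bot (neg_ne_bot_of_ne_top hne)] at hfus

theorem rel_of_rel_of_not_leb (hr : IsCongOn S r) (hS : IsSubalg S) (hx : x ∈ S) (hy : y ∈ S)
    (hxy : r x y) (hle : ¬ leb x y) {u v : Cry} (hu : u ∈ S) (hv : v ∈ S) : r u v := by
  have fus_eq_top : fus x (neg y) = top := fus_neg_eq_top_iff.mpr hle
  have hny : neg y ∈ S := hS.neg_mem_s2 hy
  have htop : top ∈ S := fus_eq_top ▸ hS.fus_mem_s2 hx hny
  have top_rel : r top (fus y (neg y)) := fus_eq_top ▸ hr.fus_right hx hy hny hxy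
  have bot_rel_top : r bot top :=
    hr.rel_bot_top_of_rel_top hS htop (hS.fus_mem_s2 hy hny) (fus_neg_self_ne_top y) top_rel
  exact hr.rel_of_rel_bot_top (hS.neg_mem_s2 htop) htop bot_rel_top hu hv

theorem rel_of_rel_of_ne (hr : IsCongOn S r) (hS : IsSubalg S) (hx : x ∈ S) (hy : y ∈ S)
    (hxy : r x y) (hne : x ≠ y) {u v : Cry} (hu : u ∈ S) (hv : v ∈ S) : r u v := by
  by_cases hle : leb x y
  · have hge : ¬ leb y x := fun hge => hne (leb_antisymm hle hge)
    exact hr.rel_of_rel_of_not_leb hS hy hx (hr.symm hx hy hxy) hge hu hv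
  · exact hr.rel_of_rel_of_not_leb hS hx hy hxy hle hu hv

end IsCongOn

end Cry

theorem four_element_simple_general {S : Set Cry} (hS : Cry.IsSubalg S) :
    (∀ r : Cry → Cry → Prop, Cry.IsCongOn S r → (∃ x ∈ S, ∃ y ∈ S, r x y ∧ x ≠ y) →
      Cry.t ∈ S → r Cry.f Cry.t) ∧
    (∀ r : Cry → Cry → Prop, Cry.IsCongOn S r →
      (∀ x ∈ S, ∀ y ∈ S, r x y ↔ x = y) ∨ (∀ x ∈ S, ∀ y ∈ S, r x y)) := by
  refine ⟨fun r hr ⟨x, hx, y, hy, hxy, hne⟩ ht =>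
    hr.rel_of_rel_of_ne hS hx hy hxy hne (hS.neg_mem_s2 ht) ht, fun r hr => ?_⟩
  by_cases hid : ∀ x ∈ S, ∀ y ∈ S, r x y → x = y
  · exact .inl fun x hx y hy => ⟨hid x hx y hy, fun hxy => hxy ▸ hr.refl hx⟩
  · push Not at hid
    obtain ⟨x, hx, y, hy, hxy, hne⟩ := hid
    exact .inr fun u hu v hv => hr.rel_of_rel_of_ne hS hx hy hxy hne hu hv

/-- Every congruence on `{⊥, t, f, ⊤}` other than the identity relates `f` and `t`;
consequently this subalgebra is simple. -/
theorem four_element_simple :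
    (∀ r : Cry → Cry → Prop, Cry.IsCongOn {Cry.bot, Cry.t, Cry.f, Cry.top} r →
      (∃ x ∈ ({Cry.bot, Cry.t, Cry.f, Cry.top} : Set Cry),
        ∃ y ∈ ({Cry.bot, Cry.t, Cry.f, Cry.top} : Set Cry), r x y ∧ x ≠ y) →
      r Cry.f Cry.t) ∧
    (∀ r : Cry → Cry → Prop, Cry.IsCongOn {Cry.bot, Cry.t, Cry.f, Cry.top} r →
      (∀ x ∈ ({Cry.bot, Cry.t, Cry.f, Cry.top} : Set Cry),
        ∀ y ∈ ({Cry.bot, Cry.t, Cry.f, Cry.top} : Set Cry), r x y ↔ x = y) ∨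
      (∀ x ∈ ({Cry.bot, Cry.t, Cry.f, Cry.top} : Set Cry),
        ∀ y ∈ ({Cry.bot, Cry.t, Cry.f, Cry.top} : Set Cry), r x y)) := by
  obtain ⟨rel_f_t, simple⟩ := four_element_simple_general Cry.isSubalg_bot_t_f_top
  exact ⟨fun r hr hne => rel_f_t r hr hne (.inr (.inl rfl)), simple⟩
end

section
/- The crystal lattice C is a commutative involutive residuated distributive lattice: (C, ∧, ∨) is a distributive lattice, (C, ·, t) is a commutative monoid, ¬ is an order-reversing involution (¬¬x = x, and x ≤ y implies ¬y ≤ ¬x), and, defining x → y = ¬(x · ¬y), the residuation law x·y ≤ z if and only if x ≤ y → z holds for all x, y, z in C. -/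
/-- The lattice order of `C` as a proposition. -/
def Cry.le (x y : Cry) : Prop := Cry.leb x y = true

/-!
The lattice laws, and the associativity and commutativity of fusion, are pulled back along two
injections. Sending `x` to the set of join-prime elements below it embeds `C` into a lattice of
finite sets. Sending `a` and `b` to orthogonal idempotents and `f` to an element of square zero that
annihilates both, with one more coordinate to separate `⊥` from `⊤`, embeds the fusion into the
multiplication of a commutative ring.

Since `¬¬x = x`, order reversal and residuation then follow from `x ≤ y ↔ x · ¬y ≤ f`: both sides
of the residuation law say that the triple product `x · y · ¬z` lies below `f`, and `x ≤ y` and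
`¬y ≤ ¬x` both say that `x · ¬y` does.
-/

section Involution

variable {M : Type*} {n : M → M} {d : M}

theorem mul_le_iff_le_of_le_iff_mul_le [Semigroup M] [LE M] (hn : Function.Involutive n)
    (hle : ∀ x y, x ≤ y ↔ x * n y ≤ d) (x y z : M) : x * y ≤ z ↔ x ≤ n (y * n z) :=
  calc
    x * y ≤ z ↔ x * y * n z ≤ d := hle _ _
    _ ↔ x * n (n (y * n z)) ≤ d := by rw [mul_assoc, hn]
    _ ↔ x ≤ n (y * n z) := (hle _ _).symm

theorem antitone_of_le_iff_mul_le [CommMagma M] [Preorder M] (hn : Function.Involutive n)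
    (hle : ∀ x y, x ≤ y ↔ x * n y ≤ d) : Antitone n := by
  intro x y hxy
  have hxy' : x * n y ≤ d := (hle x y).mp hxy
  rwa [hle, hn, mul_comm]

end Involution

namespace Cry

instance : LE Cry := ⟨le⟩

instance : DecidableLE Cry := fun x y => inferInstanceAs (Decidable (leb x y = true))

instance : LT Cry := ⟨fun x y => x ≤ y ∧ ¬y ≤ x⟩

instance : Min Cry := ⟨meet⟩

instance : Max Cry := ⟨join⟩

instance : Mul Cry := ⟨fus⟩

/-- The Birkhoff representation of the lattice `C`: the set of join-prime elements below `x`. The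
bottom element is not join-prime, and neither is `f = a ∨ b`. -/
def joinPrimesBelow (x : Cry) : Finset Cry := {p ∈ {t, a, b, top} | p ≤ x}

theorem joinPrimesBelow_subset_iff {x y : Cry} :
    joinPrimesBelow x ⊆ joinPrimesBelow y ↔ x ≤ y := by
  cases x <;> cases y <;> decide

theorem joinPrimesBelow_injective : Function.Injective joinPrimesBelow := by
  intro x y
  cases x <;> cases y <;> decide

theorem joinPrimesBelow_sup (x y : Cry) :
    joinPrimesBelow (x ⊔ y) = joinPrimesBelow x ∪ joinPrimesBelow y := by
  cases x <;> cases y <;> decide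

theorem joinPrimesBelow_inf (x y : Cry) :
    joinPrimesBelow (x ⊓ y) = joinPrimesBelow x ∩ joinPrimesBelow y := by
  cases x <;> cases y <;> decide

instance : DistribLattice Cry :=
  joinPrimesBelow_injective.distribLattice joinPrimesBelow joinPrimesBelow_subset_iff
    (and_congr joinPrimesBelow_subset_iff joinPrimesBelow_subset_iff.not)
    joinPrimesBelow_sup joinPrimesBelow_inf

/-- A faithful representation of the fusion of `C` by multiplication in a commutative ring. The
first coordinate only records whether an element differs from `⊥`. -/
def ringRep : Cry → ZMod 2 × ZMod 2 × ZMod 2 × ZMod 4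
  | bot => 0
  | t => 1
  | a => (1, 1, 0, 0)
  | b => (1, 0, 1, 0)
  | f => (1, 0, 0, 2)
  | top => (1, 0, 0, 0)

theorem ringRep_injective : Function.Injective ringRep := by
  intro x y
  cases x <;> cases y <;> decide

theorem ringRep_mul (x y : Cry) : ringRep (x * y) = ringRep x * ringRep y := by
  cases x <;> cases y <;> decide

instance : CommSemigroup Cry := ringRep_injective.commSemigroup ringRep ringRep_mul

theorem t_fus (x : Cry) : fus t x = x := by
  cases x <;> rfl

theorem neg_involutive : Function.Involutive neg := by
  intro x
  cases x <;> rfl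

theorem le_iff_mul_neg_le_f (x y : Cry) : x ≤ y ↔ x * neg y ≤ f := by
  cases x <;> cases y <;> decide

theorem neg_antitone : Antitone neg :=
  antitone_of_le_iff_mul_le neg_involutive le_iff_mul_neg_le_f

theorem mul_le_iff_le_neg_mul_neg (x y z : Cry) : x * y ≤ z ↔ x ≤ neg (y * neg z) :=
  mul_le_iff_le_of_le_iff_mul_le neg_involutive le_iff_mul_neg_le_f x y z

end Cry

/-- `C` is a commutative involutive residuated distributive lattice. -/
theorem crystal_residuated_lattice :
    (∀ x y : Cry, Cry.le x y ↔ Cry.meet x y = x) ∧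
    (∀ x y : Cry, Cry.meet x y = Cry.meet y x) ∧
    (∀ x y : Cry, Cry.join x y = Cry.join y x) ∧
    (∀ x y z : Cry, Cry.meet (Cry.meet x y) z = Cry.meet x (Cry.meet y z)) ∧
    (∀ x y z : Cry, Cry.join (Cry.join x y) z = Cry.join x (Cry.join y z)) ∧
    (∀ x y : Cry, Cry.meet x (Cry.join x y) = x) ∧
    (∀ x y : Cry, Cry.join x (Cry.meet x y) = x) ∧
    (∀ x y z : Cry, Cry.meet x (Cry.join y z) = Cry.join (Cry.meet x y) (Cry.meet x z)) ∧
    (∀ x y z : Cry, Cry.fus (Cry.fus x y) z = Cry.fus x (Cry.fus y z)) ∧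
    (∀ x y : Cry, Cry.fus x y = Cry.fus y x) ∧
    (∀ x : Cry, Cry.fus Cry.t x = x) ∧
    (∀ x : Cry, Cry.neg (Cry.neg x) = x) ∧
    (∀ x y : Cry, Cry.le x y → Cry.le (Cry.neg y) (Cry.neg x)) ∧
    (∀ x y z : Cry, Cry.le (Cry.fus x y) z ↔ Cry.le x (Cry.neg (Cry.fus y (Cry.neg z)))) :=
  ⟨fun _ _ => (inf_eq_left (α := Cry)).symm,
    inf_comm (α := Cry),
    sup_comm (α := Cry),
    inf_assoc (α := Cry),
    sup_assoc (α := Cry),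
    fun _ _ => inf_sup_self (α := Cry),
    fun _ _ => sup_inf_self (α := Cry),
    inf_sup_left (α := Cry),
    mul_assoc (G := Cry),
    mul_comm (G := Cry),
    Cry.t_fus,
    Cry.neg_involutive,
    fun _ _ hxy => Cry.neg_antitone hxy,
    Cry.mul_le_iff_le_neg_mul_neg⟩
end
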